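/- arXiv:2605.27244 — 3 statements merged into one kernel-verified Lean document; each statement's English description precedes it below -/
import Mathlib

section
/- Let X be a spectral topological space with only finitely many closed points. If M ∈ X is a closed point which is weakly visible (i.e., {M} = Y₁ ∩ (X \ Y₂) for some Thomason subsets Y₁, Y₂ of X), then M is visible; more precisely, {M} is itself a Thomason subset of X, i.e., {M} is closed and X \ {M} is a quasi-compact open subset of X. -/
/-- A subset of a topological space is *Thomason* if it is a (possibly infinite) union of
closed subsets each of which has quasi-compact complement. -/
def IsThomason {X : Type*} [TopologicalSpace X] (Y : Set X) : Prop :=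
  ∃ S : Set (Set X), (∀ C ∈ S, IsClosed C ∧ IsCompact Cᶜ) ∧ Y = ⋃₀ S

/-- A topological space is *spectral* if it is quasi-compact, T0, sober, and its
quasi-compact open subsets form a basis of the topology that is stable under
finite intersections. -/
def IsSpectralSpace (X : Type*) [TopologicalSpace X] : Prop :=
  CompactSpace X ∧ T0Space X ∧ QuasiSober X ∧
    TopologicalSpace.IsTopologicalBasis {U : Set X | IsOpen U ∧ IsCompact U} ∧
    ∀ U V : Set X, IsOpen U → IsCompact U → IsOpen V → IsCompact V → IsCompact (U ∩ V)

/-- In a spectral space with only finitely many closed points, every weakly visible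
closed point `M` is visible; more precisely `{M}` is a Thomason subset: it is closed
and its complement is quasi-compact open. -/
theorem stmt0 {X : Type*} [TopologicalSpace X] (hX : IsSpectralSpace X)
    (hfin : {x : X | IsClosed ({x} : Set X)}.Finite)
    (M : X) (hM : IsClosed ({M} : Set X))
    (hwv : ∃ Y₁ Y₂ : Set X, IsThomason Y₁ ∧ IsThomason Y₂ ∧ ({M} : Set X) = Y₁ ∩ Y₂ᶜ) :
    IsThomason ({M} : Set X) ∧ IsClosed ({M} : Set X) ∧
      IsCompact (({M} : Set X)ᶜ) ∧ IsOpen (({M} : Set X)ᶜ) := by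
  obtain ⟨hc, h0, -, hb, -⟩ := hX
  obtain ⟨Y₁, Y₂, ⟨S, hS, rfl⟩, ⟨T, hT, rfl⟩, hEq⟩ := hwv
  have hMm : M ∈ ⋃₀ S ∩ (⋃₀ T)ᶜ := hEq ▸ Set.mem_singleton M
  obtain ⟨⟨C, hCS, hMC⟩, hM2⟩ := hMm
  have key : ∀ N : X, ∃ U : Set X, IsOpen U ∧ IsCompact U ∧ M ∉ U ∧ (N ≠ M → N ∈ U) := by
    intro N
    by_cases hN : N = M
    · exact ⟨∅, isOpen_empty, isCompact_empty, by simp, fun h => (h hN).elim⟩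
    · obtain ⟨U, hU, hNU, hUM⟩ := hb.exists_subset_of_mem_open
        (show N ∈ ({M} : Set X)ᶜ from hN) hM.isOpen_compl
      exact ⟨U, hU.1, hU.2, fun h => hUM h rfl, fun _ => hNU⟩
  choose U hUo hUc hUM hUN using key
  have hcompl : ({M} : Set X)ᶜ = Cᶜ ∪ ⋃ N ∈ {x : X | IsClosed ({x} : Set X)}, U N := by
    apply Set.Subset.antisymm
    · intro x hx
      by_cases hxC : x ∈ C
      · right
        have hxT : x ∈ ⋃₀ T := by
          by_contra h
          have : x ∈ ({M} : Set X) := hEq ▸ ⟨⟨C, hCS, hxC⟩, h⟩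
          exact hx this
        obtain ⟨D, hD, hxD⟩ := hxT
        by_contra hxU
        obtain ⟨N, hNc, hN⟩ := IsClosed.exists_closed_singleton
          (isClosed_closure (s := ({x} : Set X))) ⟨x, subset_closure rfl⟩
        have hspec : x ⤳ N := specializes_iff_mem_closure.2 hNc
        by_cases hNM : N = M
        · subst hNM
          exact hM2 ⟨D, hD, hspec.mem_closed (hT D hD).1 hxD⟩
        · exact hxU (Set.mem_biUnion hN (hspec.mem_open (hUo N) (hUN N hNM)))
      · exact Or.inl hxC
    · rintro x (hx | hx) rfl
      · exact hx hMC
      · simp only [Set.mem_iUnion] at hx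
        obtain ⟨N, -, h⟩ := hx
        exact hUM N h
  have hcpt : IsCompact ({M} : Set X)ᶜ := by
    rw [hcompl]
    exact (hS C hCS).2.union (hfin.isCompact_biUnion fun N _ => hUc N)
  exact ⟨⟨{{M}}, by rintro _ rfl; exact ⟨hM, hcpt⟩, by simp⟩, hM, hcpt, hM.isOpen_compl⟩
end

section
/- Let X be a spectral topological space. Let M ∈ X be a closed point such that X \ {M} is quasi-compact, and let C ⊆ X be a closed subset with quasi-compact complement such that gen(M) ∩ C = {M}. Then C \ {M} is a closed subset of X whose complement is quasi-compact; in particular, C is the disjoint union of the two closed Thomason subsets C \ {M} and {M}. -/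
/-- The set of generalizations of a point: `gen x = {y | x ∈ closure {y}}`. -/
def gen {X : Type*} [TopologicalSpace X] (x : X) : Set X := {y | x ∈ closure ({y} : Set X)}

theorem aux_compact {X : Type*} [TopologicalSpace X] [CompactSpace X] [QuasiSober X]
    [PrespectralSpace X] [QuasiSeparatedSpace X] : @CompactSpace X (constructibleTopology X) := by
  exact @Function.Surjective.compactSpace (WithConstructibleTopology X) X _
    (constructibleTopology X) _
    (WithTopology.continuous_ofTopology _) compactSpace_withConstructibleTopology
    (WithTopology.ofTopology_surjective _)

theorem aux_elim {X : Type*} [TopologicalSpace X] [CompactSpace X] {ι : Type*} [Nonempty ι]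
    (K : Set X) (hK : IsClosed K) (U : ι → Set X) (hU : ∀ i, IsClosed (U i))
    (hd : Directed (· ⊇ ·) U) (h : K ∩ ⋂ i, U i = ∅) : ∃ i, K ∩ U i = ∅ :=
  hK.isCompact.elim_directed_family_closed U hU h hd

/-- Let `X` be spectral, `M` a closed point with quasi-compact complement, and `C ⊆ X`
closed with quasi-compact complement such that `gen(M) ∩ C = {M}`. Then `C \ {M}` is
closed with quasi-compact complement; in particular `C` is the disjoint union of the
two closed Thomason subsets `C \ {M}` and `{M}`. -/
theorem stmt1 {X : Type*} [TopologicalSpace X] (hX : IsSpectralSpace X)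
    (M : X) (hM : IsClosed ({M} : Set X)) (hMc : IsCompact (({M} : Set X)ᶜ))
    (C : Set X) (hC : IsClosed C) (hCc : IsCompact Cᶜ)
    (hgen : gen M ∩ C = {M}) :
    IsClosed (C \ {M}) ∧ IsCompact ((C \ {M})ᶜ) ∧
      C = (C \ {M}) ∪ {M} ∧ Disjoint (C \ {M}) ({M} : Set X) ∧
      IsThomason (C \ {M}) ∧ IsThomason ({M} : Set X) := by
  obtain ⟨h1, h2, h3, h4, h5⟩ := hX
  have : PrespectralSpace X := ⟨h4⟩
  have : QuasiSeparatedSpace X := ⟨h5⟩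
  have hMC : M ∈ C := (hgen.symm ▸ Set.mem_singleton M : M ∈ gen M ∩ C).2
  have hcompl : (C \ {M})ᶜ = Cᶜ ∪ {M} := by
    ext x; simp only [Set.mem_compl_iff, Set.mem_sdiff, Set.mem_union]; tauto
  have hcpt : IsCompact ((C \ {M})ᶜ) := by
    rw [hcompl]; exact hCc.union isCompact_singleton
  have hK : @IsClosed X (constructibleTopology X) (C \ {M}) := by
    rw [← @isOpen_compl_iff X _ (constructibleTopology X), hcompl]
    exact @IsOpen.union X _ _ (constructibleTopology X)
      (hCc.isOpen_constructibleTopology_of_isOpen hC.isOpen_compl)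
      (hMc.isOpen_constructibleTopology_of_isClosed hM)
  let ι := {U : Set X // IsOpen U ∧ IsCompact U ∧ M ∈ U}
  have : Nonempty ι := ⟨⟨Set.univ, isOpen_univ, isCompact_univ, trivial⟩⟩
  obtain ⟨⟨U, hUo, hUc, hMU⟩, hU⟩ := @aux_elim X (constructibleTopology X) aux_compact ι _
    (C \ {M}) hK (fun U => U.1)
    (fun U => by
      rw [← @isOpen_compl_iff X _ (constructibleTopology X)]
      refine IsCompact.isOpen_constructibleTopology_of_isClosed ?_ U.2.1.isClosed_compl
      rw [compl_compl]; exact U.2.2.1)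
    (fun U V => ⟨⟨U.1 ∩ V.1, U.2.1.inter V.2.1, h5 _ _ U.2.1 U.2.2.1 V.2.1 V.2.2.1,
      U.2.2.2, V.2.2.2⟩, Set.inter_subset_left, Set.inter_subset_right⟩)
    (by
      rw [Set.eq_empty_iff_forall_notMem]
      rintro x ⟨⟨hxC, hxM⟩, hx⟩
      refine hxM (hgen ▸ (⟨?_, hxC⟩ : x ∈ gen M ∩ C))
      change M ∈ closure {x}
      rw [h4.mem_closure_iff]
      intro V hV hMV
      exact ⟨x, Set.mem_iInter.1 hx ⟨V, hV.1, hV.2, hMV⟩, rfl⟩)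
  have hcl : IsClosed (C \ {M}) := by
    have : (C \ {M})ᶜ = Cᶜ ∪ U := by
      ext x
      have hx : ¬ (x ∈ (C \ {M}) ∩ U) := by
        change ((C \ {M}) ∩ U) = ∅ at hU
        rw [hU]; exact id
      by_cases h : x = M
      · subst h; simp [hMU]
      · simp only [Set.mem_compl_iff, Set.mem_sdiff, Set.mem_union, Set.mem_inter_iff,
          Set.mem_singleton_iff] at hx ⊢
        tauto
    rw [← isOpen_compl_iff, this]
    exact hC.isOpen_compl.union hUo
  refine ⟨hcl, hcpt, ?_, Set.disjoint_sdiff_left, ⟨{C \ {M}}, ?_, by simp⟩, ⟨{{M}}, ?_, by simp⟩⟩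
  · rw [Set.sdiff_union_self, Set.union_eq_self_of_subset_right (Set.singleton_subset_iff.2 hMC)]
  · rintro D rfl; exact ⟨hcl, hcpt⟩
  · rintro D rfl; exact ⟨hM, hMc⟩
end

section
/- Let X be a spectral topological space and x ∈ X. Then X \ gen(x) is a Thomason subset of X, and {x} = closure({x}) ∩ gen(x). Consequently, every visible point of X (i.e., a point x such that closure({x}) is a Thomason subset) is weakly visible. -/
/-- In a spectral space `X`, for every `x ∈ X` the complement of `gen x` is a Thomason
subset and `{x} = closure {x} ∩ gen x`; consequently every visible point is weakly
visible. -/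
theorem stmt3 {X : Type*} [TopologicalSpace X] (hX : IsSpectralSpace X) (x : X) :
    IsThomason ((gen x)ᶜ) ∧ ({x} : Set X) = closure ({x} : Set X) ∩ gen x ∧
      (IsThomason (closure ({x} : Set X)) →
        ∃ Y₁ Y₂ : Set X, IsThomason Y₁ ∧ IsThomason Y₂ ∧ ({x} : Set X) = Y₁ ∩ Y₂ᶜ) := by
  obtain ⟨_, hT0, _, hB, _⟩ := hX
  have h1 : IsThomason ((gen x)ᶜ) := by
    refine ⟨{C | IsClosed C ∧ IsCompact Cᶜ ∧ x ∉ C}, fun C hC => ⟨hC.1, hC.2.1⟩, ?_⟩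
    ext y
    constructor
    · intro hy
      have hx : x ∈ (closure ({y} : Set X))ᶜ := hy
      obtain ⟨U, ⟨hUo, hUc⟩, hxU, hU⟩ :=
        hB.exists_subset_of_mem_open hx isClosed_closure.isOpen_compl
      refine ⟨Uᶜ, ⟨hUo.isClosed_compl, by rwa [compl_compl], fun h => h hxU⟩, ?_⟩
      exact fun hyU => hU hyU (subset_closure rfl)
    · rintro ⟨C, ⟨hC, _, hxC⟩, hyC⟩ hy
      exact hxC (closure_minimal (Set.singleton_subset_iff.mpr hyC) hC hy)
  have h2 : ({x} : Set X) = closure ({x} : Set X) ∩ gen x := by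
    ext y
    constructor
    · intro hy
      have hyx : y = x := hy
      subst hyx
      exact ⟨subset_closure rfl, subset_closure rfl⟩
    · rintro ⟨ha, hb⟩
      have hb' : x ∈ closure ({y} : Set X) := hb
      have e : y = x := ((specializes_iff_mem_closure.mpr hb').antisymm
        (specializes_iff_mem_closure.mpr ha)).eq
      exact e
  refine ⟨h1, h2, fun hv => ⟨_, _, hv, h1, ?_⟩⟩
  rw [compl_compl]
  exact h2
end
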